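/- For all integers L ≥ 2 and all integers i, j, the q-multinomial coefficients of order 3 satisfy the symmetric second-order recurrence \binom{L}{i, j, L-i-j}_q = \binom{L-1}{i, j, L-1-i-j}_q + q^{L-i} \binom{L-1}{i-1, j, L-i-j}_q + q^{L-j} \binom{L-1}{i, j-1, L-i-j}_q + q^{L-i-j} (1 - q^{L-1}) \binom{L-2}{i-1, j-1, L-i-j}_q, where a q-multinomial coefficient is interpreted as 0 whenever any of its three lower arguments is negative. -/

import Mathlib

open Finset

/-- `(q)_n = (q;q)_n = ∏_{t=0}^{n-1} (1 - q^{t+1})` in `ℚ(q)`. -/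
noncomputable def qPoch (n : ℕ) : RatFunc ℚ :=
  ∏ t ∈ Finset.range n, (1 - (RatFunc.X : RatFunc ℚ) ^ (t + 1))

/-- The q-multinomial coefficient of order 3,
`[u+v+w; u, v, w] = (q)_{u+v+w} / ((q)_u (q)_v (q)_w)`, set to `0` if any of
`u, v, w` is negative. -/
noncomputable def qtrinom (u v w : ℤ) : RatFunc ℚ :=
  if 0 ≤ u ∧ 0 ≤ v ∧ 0 ≤ w then
    qPoch (u + v + w).toNat / (qPoch u.toNat * qPoch v.toNat * qPoch w.toNat) else 0

/-!
After multiplication by `1 - q ^ L`, the absorption rule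
`(1 - q ^ (u + v + w)) [u - 1, v, w] = (1 - q ^ u) [u, v, w]` and its permutations turn each term of
the recurrence into a multiple of `[i, j, k]`, where `k = L - i - j`. With `x = q ^ i`, `y = q ^ j`,
`z = q ^ k`, what remains is
`1 - x y z = (1 - z) + y z (1 - x) + x z (1 - y) + z (1 - x) (1 - y)`.
-/

section General

variable {K : Type*} [Field K]

/-- The `q`-shifted factorial `(q; q)_n`, for a base `q` in an arbitrary field; `qPoch` is the case
`q = X` in `ℚ(X)`. -/
def qPochhammer (q : K) (n : ℕ) : K :=
  ∏ t ∈ range n, (1 - q ^ (t + 1))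

/-- The `q`-multinomial coefficient of order 3, for a base `q` in an arbitrary field; `qtrinom` is
the case `q = X` in `ℚ(X)`. It is defined as a quotient, so it is only meaningful when `q` is not a
root of unity. -/
def qTrinomial (q : K) (u v w : ℤ) : K :=
  if 0 ≤ u ∧ 0 ≤ v ∧ 0 ≤ w then
    qPochhammer q (u + v + w).toNat /
      (qPochhammer q u.toNat * qPochhammer q v.toNat * qPochhammer q w.toNat)
  else 0

lemma qPochhammer_succ (q : K) (n : ℕ) :
    qPochhammer q (n + 1) = qPochhammer q n * (1 - q ^ (n + 1)) :=
  prod_range_succ _ _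

lemma qTrinomial_natCast (q : K) (a b c : ℕ) :
    qTrinomial q a b c =
      qPochhammer q (a + b + c) / (qPochhammer q a * qPochhammer q b * qPochhammer q c) := by
  rw [qTrinomial, if_pos (by simp)]
  norm_cast

lemma qTrinomial_eq_zero (q : K) {u v w : ℤ} (h : u < 0 ∨ v < 0 ∨ w < 0) :
    qTrinomial q u v w = 0 :=
  if_neg (by omega)

lemma qTrinomial_swap_left (q : K) (u v w : ℤ) : qTrinomial q u v w = qTrinomial q v u w := by
  simp only [qTrinomial, add_comm u v, mul_comm (qPochhammer q u.toNat), and_left_comm]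

lemma qTrinomial_swap_right (q : K) (u v w : ℤ) : qTrinomial q u v w = qTrinomial q u w v := by
  simp only [qTrinomial, add_right_comm u v w, mul_right_comm (qPochhammer q u.toNat),
    and_comm (a := 0 ≤ v)]

variable {q : K}

lemma one_sub_zpow_ne_zero (hq : ¬ IsOfFinOrder q) {n : ℤ} (hn : n ≠ 0) : 1 - q ^ n ≠ 0 :=
  fun h ↦ hq <| isOfFinOrder_iff_zpow_eq_one.mpr ⟨n, hn, (sub_eq_zero.mp h).symm⟩

lemma one_sub_pow_succ_ne_zero (hq : ¬ IsOfFinOrder q) (n : ℕ) : 1 - q ^ (n + 1) ≠ 0 :=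
  mod_cast one_sub_zpow_ne_zero hq (n := (n + 1 : ℕ)) (by omega)

lemma qPochhammer_ne_zero (hq : ¬ IsOfFinOrder q) (n : ℕ) : qPochhammer q n ≠ 0 :=
  prod_ne_zero_iff.mpr fun t _ ↦ one_sub_pow_succ_ne_zero hq t

lemma one_sub_pow_mul_qTrinomial_natCast (hq : ¬ IsOfFinOrder q) (a b c : ℕ) :
    (1 - q ^ (a + b + c + 1)) * qTrinomial q a b c =
      (1 - q ^ (a + 1)) * qTrinomial q (a + 1 : ℕ) b c := by
  have ha := qPochhammer_ne_zero hq a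
  have hb := qPochhammer_ne_zero hq b
  have hc := qPochhammer_ne_zero hq c
  have ha' := one_sub_pow_succ_ne_zero hq a
  rw [qTrinomial_natCast, qTrinomial_natCast, show a + 1 + b + c = a + b + c + 1 by ring,
    qPochhammer_succ, qPochhammer_succ]
  field_simp

lemma one_sub_zpow_mul_qTrinomial_sub_one_left (hq : ¬ IsOfFinOrder q) (u v w : ℤ) :
    (1 - q ^ (u + v + w)) * qTrinomial q (u - 1) v w = (1 - q ^ u) * qTrinomial q u v w := by
  by_cases h : 1 ≤ u ∧ 0 ≤ v ∧ 0 ≤ w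
  · obtain ⟨hu, hv, hw⟩ := h
    obtain ⟨a, rfl⟩ : ∃ a : ℕ, u = (a + 1 : ℕ) := ⟨(u - 1).toNat, by omega⟩
    lift v to ℕ using hv
    lift w to ℕ using hw
    rw [show ((a + 1 : ℕ) : ℤ) + v + w = (a + v + w + 1 : ℕ) by push_cast; ring,
      show ((a + 1 : ℕ) : ℤ) - 1 = a by simp, zpow_natCast, zpow_natCast]
    exact one_sub_pow_mul_qTrinomial_natCast hq a v w
  · rw [qTrinomial_eq_zero q (u := u - 1) (by omega), mul_zero]
    obtain rfl | h_neg : u = 0 ∨ (u < 0 ∨ v < 0 ∨ w < 0) := by omega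
    · simp
    · rw [qTrinomial_eq_zero q h_neg, mul_zero]

lemma one_sub_zpow_mul_qTrinomial_sub_one_middle (hq : ¬ IsOfFinOrder q) (u v w : ℤ) :
    (1 - q ^ (u + v + w)) * qTrinomial q u (v - 1) w = (1 - q ^ v) * qTrinomial q u v w := by
  rw [qTrinomial_swap_left q u, qTrinomial_swap_left q u, add_comm u v]
  exact one_sub_zpow_mul_qTrinomial_sub_one_left hq v u w

lemma one_sub_zpow_mul_qTrinomial_sub_one_right (hq : ¬ IsOfFinOrder q) (u v w : ℤ) :
    (1 - q ^ (u + v + w)) * qTrinomial q u v (w - 1) = (1 - q ^ w) * qTrinomial q u v w := by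
  rw [qTrinomial_swap_right q u, qTrinomial_swap_right q u v, add_right_comm u v w]
  exact one_sub_zpow_mul_qTrinomial_sub_one_middle hq u w v

theorem qtrinomial_symmetric_recurrence_general (hq₀ : q ≠ 0) (hq : ¬ IsOfFinOrder q)
    {L : ℤ} (hL : L ≠ 0) (i j : ℤ) :
    qTrinomial q i j (L - i - j) =
      qTrinomial q i j (L - 1 - i - j) +
      q ^ (L - i) * qTrinomial q (i - 1) j (L - i - j) +
      q ^ (L - j) * qTrinomial q i (j - 1) (L - i - j) +
      q ^ (L - i - j) * (1 - q ^ (L - 1)) * qTrinomial q (i - 1) (j - 1) (L - i - j) := by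
  obtain ⟨k, rfl⟩ : ∃ k, L = i + j + k := ⟨L - i - j, by ring⟩
  rw [show i + j + k - i - j = k by ring, show i + j + k - 1 - i - j = k - 1 by ring,
    show i + j + k - i = j + k by ring, show i + j + k - j = i + k by ring]
  have absorb_i := one_sub_zpow_mul_qTrinomial_sub_one_left hq i j k
  have absorb_j := one_sub_zpow_mul_qTrinomial_sub_one_middle hq i j k
  have absorb_k := one_sub_zpow_mul_qTrinomial_sub_one_right hq i j k
  have absorb_ij := one_sub_zpow_mul_qTrinomial_sub_one_middle hq (i - 1) j k
  rw [show i - 1 + j + k = i + j + k - 1 by ring] at absorb_ij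
  rw [mul_assoc (q ^ k), absorb_ij]
  refine mul_left_cancel₀ (one_sub_zpow_ne_zero hq hL) ?_
  simp only [zpow_add₀ hq₀] at absorb_i absorb_j absorb_k ⊢
  linear_combination -absorb_k - (q ^ j * q ^ k + q ^ k * (1 - q ^ j)) * absorb_i
    - q ^ i * q ^ k * absorb_j

end General

lemma not_isOfFinOrder_ratFuncX (F : Type*) [CommRing F] [IsDomain F] :
    ¬ IsOfFinOrder (RatFunc.X : RatFunc F) := by
  intro h
  obtain ⟨n, hn, hX⟩ := isOfFinOrder_iff_pow_eq_one.mp h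
  rw [← RatFunc.algebraMap_X, ← map_pow, ← map_one (algebraMap (Polynomial F) (RatFunc F))] at hX
  have hdeg := congrArg Polynomial.natDegree (RatFunc.algebraMap_injective F hX)
  rw [Polynomial.natDegree_X_pow, Polynomial.natDegree_one] at hdeg
  exact hn.ne' hdeg

/-- The symmetric second order recurrence (5.8) for the q-multinomial coefficients:
for all integers `L ≥ 2` and all integers `i, j`,
`[L; i,j,L-i-j] = [L-1; i,j,L-1-i-j] + q^{L-i} [L-1; i-1,j,L-i-j]
  + q^{L-j} [L-1; i,j-1,L-i-j] + q^{L-i-j}(1-q^{L-1}) [L-2; i-1,j-1,L-i-j]`. -/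
theorem qtrinomial_symmetric_recurrence (L i j : ℤ) (hL : 2 ≤ L) :
    qtrinom i j (L - i - j) =
      qtrinom i j (L - 1 - i - j) +
      (RatFunc.X : RatFunc ℚ) ^ (L - i) * qtrinom (i - 1) j (L - i - j) +
      (RatFunc.X : RatFunc ℚ) ^ (L - j) * qtrinom i (j - 1) (L - i - j) +
      (RatFunc.X : RatFunc ℚ) ^ (L - i - j) * (1 - (RatFunc.X : RatFunc ℚ) ^ (L - 1)) *
        qtrinom (i - 1) (j - 1) (L - i - j) :=
  qtrinomial_symmetric_recurrence_general RatFunc.X_ne_zero (not_isOfFinOrder_ratFuncX ℚ)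
    (by omega) i j
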